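/- arXiv:1702.04969 — 2 statements merged into one kernel-verified Lean document; each statement's English description precedes it below -/
import Mathlib

section
/- Let 1 < p ≤ q < ∞ and let p' = p/(p-1). Let u, v : (0,∞) → [0,∞) be measurable. Then there exists a constant c > 0 such that (∫₀^∞ [u(x) ∫_x^∞ f(t) dt]^{q} dx)^{1/q} ≤ c (∫₀^∞ [f(x) v(x)]^{p} dx)^{1/p} holds for all non-negative measurable f : (0,∞) → [0,∞) if and only if sup_{r>0} (∫₀^r u(x)^{q} dx)^{1/q} (∫_r^∞ v(x)^{-p'} dx)^{1/p'} < ∞. -/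
open MeasureTheory Set ENNReal

lemma hardy_ivt (f : ℝ → ℝ≥0∞) (hf : Measurable f) (x : ℝ) (s : ℝ≥0∞) (hs0 : s ≠ 0)
    (hs : s < ∫⁻ t in Ioi x, f t) (hfin : ∫⁻ t in Ioi x, f t ≠ ∞) :
    ∃ y, x ≤ y ∧ ∫⁻ t in Ioi y, f t = s := by
  have hint : IntegrableOn (fun t => (f t).toReal) (Ioi x) :=
    integrable_toReal_of_lintegral_ne_top hf.aemeasurable hfin
  set φ : ℝ → ℝ := (Ioi x).indicator (fun t => (f t).toReal) with hφ
  have hφi : Integrable φ := (integrable_indicator_iff measurableSet_Ioi).2 hint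
  have hae : ∀ᵐ t ∂(volume.restrict (Ioi x)), f t < ∞ := ae_lt_top hf hfin
  have hT : ∫ t in Ioi x, φ t = (∫⁻ t in Ioi x, f t).toReal := by
    rw [← integral_toReal hf.aemeasurable hae]
    exact setIntegral_congr_fun measurableSet_Ioi (fun t ht => by simp [hφ, mem_Ioi.1 ht])
  have hG : ∀ y, x ≤ y → ∫ t in x..y, φ t = (∫⁻ t in Ioc x y, f t).toReal := by
    intro y hy
    rw [intervalIntegral.integral_of_le hy, ← integral_toReal hf.aemeasurable
      (ae_restrict_of_ae_restrict_of_subset Ioc_subset_Ioi_self hae)]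
    exact setIntegral_congr_fun measurableSet_Ioc (fun t ht => by simp [hφ, ht.1])
  have hsfin : s ≠ ∞ := (hs.trans_le le_top).ne
  have hsT : s.toReal < (∫⁻ t in Ioi x, f t).toReal := (ENNReal.toReal_lt_toReal hsfin hfin).2 hs
  have hspos : 0 < s.toReal := ENNReal.toReal_pos hs0 hsfin
  have hlim := intervalIntegral_tendsto_integral_Ioi x hφi.integrableOn Filter.tendsto_id
  rw [hT] at hlim
  have hev := hlim.eventually (lt_mem_nhds (sub_lt_self _ hspos))
  obtain ⟨w, hw, hxw⟩ := (hev.and (Filter.eventually_ge_atTop x)).exists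
  have hcont : Continuous fun b => ∫ t in x..b, φ t := hφi.continuous_primitive x
  obtain ⟨y, hy, hyG⟩ := intermediate_value_Icc hxw hcont.continuousOn
    (show (∫⁻ t in Ioi x, f t).toReal - s.toReal ∈ _ from ⟨by simp; exact hsT.le, hw.le⟩)
  refine ⟨y, hy.1, ?_⟩
  have hsplit : ∫⁻ t in Ioi x, f t = (∫⁻ t in Ioc x y, f t) + ∫⁻ t in Ioi y, f t := by
    rw [← lintegral_union measurableSet_Ioi (Ioc_disjoint_Ioi le_rfl), Ioc_union_Ioi_eq_Ioi hy.1]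
  simp only [hG y hy.1] at hyG
  have h1 : ∫⁻ t in Ioc x y, f t ≠ ∞ := fun h => hfin (by rw [hsplit, h]; simp)
  have h2 : ∫⁻ t in Ioi y, f t ≠ ∞ := fun h => hfin (by rw [hsplit, h]; simp)
  rw [hsplit, ENNReal.toReal_add h1 h2] at hyG
  exact (ENNReal.toReal_eq_toReal_iff' h2 hsfin).1 (by linarith)

lemma hardy_holder (p : ℝ) (hp : 1 < p) (f v : ℝ → ℝ≥0∞) (hf : Measurable f) (hv : Measurable v)
    (hvt : ∀ x, v x ≠ ∞) (A : Set ℝ)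
    (hV : ∫⁻ t in A, v t ^ (-(p / (p - 1))) ≠ ∞) :
    ∫⁻ t in A, f t ≤ (∫⁻ t in A, (f t * v t) ^ p) ^ (1 / p) *
      (∫⁻ t in A, v t ^ (-(p / (p - 1)))) ^ ((p - 1) / p) := by
  have hp1 : 0 < p / (p - 1) := div_pos (by linarith) (by linarith)
  have hae := ae_lt_top (hv.pow_const _) hV
  have hconj : p.HolderConjugate (p / (p - 1)) := Real.HolderConjugate.conjExponent hp
  have h := lintegral_mul_le_Lp_mul_Lq (volume.restrict A) hconj
    (hf.mul hv).aemeasurable hv.inv.aemeasurable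
  have e : 1 / (p / (p - 1)) = (p - 1) / p := by rw [one_div_div]
  rw [e] at h
  have e2 : ∀ t, (v⁻¹) t ^ (p / (p - 1)) = v t ^ (-(p / (p - 1))) := by
    intro t; rw [ENNReal.rpow_neg, Pi.inv_apply, ENNReal.inv_rpow]
  simp only [e2] at h
  refine le_trans (le_of_eq (lintegral_congr_ae ?_)) h
  filter_upwards [hae] with t ht
  have h0 : v t ≠ 0 := by
    intro h0
    rw [h0, ENNReal.zero_rpow_of_neg (by linarith)] at ht
    exact lt_irrefl _ ht
  simp [mul_assoc, ENNReal.mul_inv_cancel h0 (hvt t)]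

lemma hardy_tsum {ι : Type*} (a : ι → ℝ≥0∞) (s : ℝ) (hs : 1 ≤ s) :
    ∑' i, a i ^ s ≤ (∑' i, a i) ^ s := by
  have key : ∀ x : ℝ≥0∞, x ^ s = x * x ^ (s - 1) := by
    intro x
    conv_lhs => rw [show s = 1 + (s - 1) by ring]
    rw [ENNReal.rpow_add_of_nonneg _ _ (by norm_num) (by linarith), ENNReal.rpow_one]
  rw [key (∑' i, a i), ← ENNReal.tsum_mul_right]
  refine ENNReal.tsum_le_tsum fun i => ?_
  rw [key]
  gcongr
  exact ENNReal.le_tsum i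

lemma hardy_block (p q : ℝ) (hp : 1 < p) (hpq : p ≤ q) (u v f : ℝ → ℝ≥0∞)
    (hv : Measurable v) (hf : Measurable f)
    (hvt : ∀ x, v x ≠ ∞) (B : ℝ≥0∞) (hB : B ≠ ∞)
    (hUV : ∀ r : ℝ, 0 < r → (∫⁻ x in Ioc 0 r, u x ^ q) ^ (1 / q) *
      (∫⁻ x in Ioi r, v x ^ (-(p / (p - 1)))) ^ ((p - 1) / p) ≤ B) (y : ℝ) (hy : 0 < y)
    (A : Set ℝ) (hA : A ⊆ Ioi y) :
    (∫⁻ t in A, f t) * (∫⁻ x in Ioc 0 y, u x ^ q) ^ (1 / q) ≤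
      B * (∫⁻ t in A, (f t * v t) ^ p) ^ (1 / p) := by
  have hp' : 0 < (p - 1) / p := div_pos (by linarith) (by linarith)
  have hq : 0 < 1 / q := by have : 0 < q := by linarith
                            positivity
  by_cases hU : (∫⁻ x in Ioc 0 y, u x ^ q) ^ (1 / q) = 0
  · rw [hU, mul_zero]; exact zero_le
  have hVt : ∫⁻ x in Ioi y, v x ^ (-(p / (p - 1))) ≠ ∞ := by
    intro h
    have := hUV y hy
    rw [h, ENNReal.top_rpow_of_pos hp', ENNReal.mul_top hU] at this
    exact hB (top_le_iff.1 this)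
  have hVA : ∫⁻ x in A, v x ^ (-(p / (p - 1))) ≤ ∫⁻ x in Ioi y, v x ^ (-(p / (p - 1))) :=
    lintegral_mono_set hA
  calc _ ≤ ((∫⁻ t in A, (f t * v t) ^ p) ^ (1 / p) *
      (∫⁻ t in Ioi y, v t ^ (-(p / (p - 1)))) ^ ((p - 1) / p)) *
        (∫⁻ x in Ioc 0 y, u x ^ q) ^ (1 / q) := by
        gcongr
        refine (hardy_holder p hp f v hf hv hvt A (ne_top_of_le_ne_top hVt hVA)).trans ?_
        gcongr
    _ = ((∫⁻ x in Ioc 0 y, u x ^ q) ^ (1 / q) *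
          (∫⁻ t in Ioi y, v t ^ (-(p / (p - 1)))) ^ ((p - 1) / p)) *
          (∫⁻ t in A, (f t * v t) ^ p) ^ (1 / p) := by ring
    _ ≤ _ := by gcongr; exact hUV y hy

lemma hardy_suff (p q : ℝ) (hp : 1 < p) (hpq : p ≤ q) (u v f : ℝ → ℝ≥0∞)
    (hu : Measurable u) (hv : Measurable v) (hf : Measurable f)
    (hvt : ∀ x, v x ≠ ∞) (B : ℝ≥0∞) (hB : B ≠ ∞)
    (hUV : ∀ r : ℝ, 0 < r → (∫⁻ x in Ioc 0 r, u x ^ q) ^ (1 / q) *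
      (∫⁻ x in Ioi r, v x ^ (-(p / (p - 1)))) ^ ((p - 1) / p) ≤ B)
    (hR : ∫⁻ x in Ioi 0, (f x * v x) ^ p ≠ ∞) :
    (∫⁻ x in Ioi (0 : ℝ), (u x * ∫⁻ t in Ioi x, f t) ^ q) ^ (1 / q) ≤
      8 * B * (∫⁻ x in Ioi 0, (f x * v x) ^ p) ^ (1 / p) := by
  have hp0 : 0 < p := by linarith
  have hq0 : 0 < q := by linarith
  set F : ℝ → ℝ≥0∞ := fun x => ∫⁻ t in Ioi x, f t with hF
  have hFanti : Antitone F := fun a b hab => lintegral_mono_set (Ioi_subset_Ioi hab)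
  have hFm : Measurable F := hFanti.measurable
  let E : ℤ → Set ℝ := fun k => Ioi 0 ∩ F ⁻¹' (Ioc (2 ^ k) (2 ^ (k + 1)))
  have hEm : ∀ k, MeasurableSet (E k) := fun k => measurableSet_Ioi.inter (hFm measurableSet_Ioc)
  have h2mono : ∀ i j : ℤ, i ≤ j → (2 : ℝ≥0∞) ^ i ≤ 2 ^ j := fun i j h =>
    ENNReal.zpow_le_of_le (by norm_num) h
  have hEd : Pairwise (Function.onFun Disjoint E) := by
    have aux : ∀ i j : ℤ, i < j → Disjoint (E i) (E j) := by
      intro i j hij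
      rw [Set.disjoint_left]
      rintro x ⟨_, hx1, hx2⟩ ⟨_, hx3, hx4⟩
      exact absurd (hx3.trans_le hx2) (not_lt.2 (h2mono _ _ (by omega)))
    intro i j hij
    rcases lt_or_gt_of_ne hij with h | h
    · exact aux i j h
    · exact (aux j i h).symm
  let S : Set ℝ := Ioi 0 ∩ F ⁻¹' {∞}
  let Z : Set ℝ := Ioi 0 ∩ F ⁻¹' {0}
  have hcover : Ioi (0 : ℝ) ⊆ (Z ∪ S) ∪ ⋃ k, E k := by
    intro x hx
    by_cases h0 : F x = 0
    · exact Or.inl (Or.inl ⟨hx, h0⟩)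
    by_cases h1 : F x = ∞
    · exact Or.inl (Or.inr ⟨hx, h1⟩)
    obtain ⟨n, hn⟩ := ENNReal.exists_mem_Ioc_zpow h0 h1 (y := 2) (by norm_num) (by norm_num)
    exact Or.inr (mem_iUnion.2 ⟨n, hx, hn⟩)
  have hZm : MeasurableSet Z := measurableSet_Ioi.inter (hFm (measurableSet_singleton _))
  have hSm : MeasurableSet S := measurableSet_Ioi.inter (hFm (measurableSet_singleton _))
  have hZ : ∫⁻ x in Z, (u x * F x) ^ q = 0 := by
    rw [setLIntegral_congr_fun (g := fun _ => 0) hZm]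
    · simp
    · intro x hx
      have : F x = 0 := hx.2
      simp [this, hq0]
  have hS : ∫⁻ x in S, (u x * F x) ^ q = 0 := by
    have hae : ∀ᵐ x ∂volume.restrict S, u x = 0 := by
      apply ae_restrict_of_ae_restrict_inter_Ioo
      intro a b ha hb hab
      have hb0 : 0 < b := hb.1
      have hblock := hardy_block p q hp hpq u v f hv hf hvt B hB hUV b hb0 (Ioi b) subset_rfl
      have hFb : ∫⁻ t in Ioi b, f t = ∞ := hb.2
      have hU0 : (∫⁻ x in Ioc 0 b, u x ^ q) ^ (1 / q) = 0 := by
        by_contra hne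
        rw [hFb, ENNReal.top_mul hne] at hblock
        refine ENNReal.mul_ne_top hB ?_ (top_le_iff.1 hblock)
        refine ENNReal.rpow_ne_top_of_nonneg (by positivity) ?_
        exact ne_top_of_le_ne_top hR (lintegral_mono_set (Ioi_subset_Ioi hb0.le))
      have hU1 : ∫⁻ x in Ioc 0 b, u x ^ q = 0 := by
        rcases ENNReal.rpow_eq_zero_iff.1 hU0 with h | h
        · exact h.1
        · exact absurd h.2 (not_lt.2 (by positivity))
      rw [lintegral_eq_zero_iff (hu.pow_const _)] at hU1
      have hsub : S ∩ Ioo a b ⊆ Ioc 0 b := fun x hx => ⟨hx.1.1, hx.2.2.le⟩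
      filter_upwards [ae_restrict_of_ae_restrict_of_subset hsub hU1] with x hx
      rcases ENNReal.rpow_eq_zero_iff.1 hx with h | h
      · exact h.1
      · exact absurd h.2 (not_lt.2 hq0.le)
    rw [lintegral_congr_ae (g := fun _ => 0)]
    · simp
    · filter_upwards [hae] with x hx
      simp [hx, hq0]
  have hE : ∀ k : ℤ, ∫⁻ x in E k, (u x * F x) ^ q ≤
      (8 * B) ^ q * (∫⁻ x in E (k - 1), (f x * v x) ^ p) ^ (q / p) := by
    intro k
    by_cases hne : (E k).Nonempty
    swap
    · rw [not_nonempty_iff_eq_empty.1 hne]; simp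
    obtain ⟨x, hx0, hx1, hx2⟩ := hne
    have hx0 : 0 < x := hx0
    have h2k0 : (2 : ℝ≥0∞) ^ k ≠ 0 := (ENNReal.zpow_pos (by norm_num) (by norm_num) k).ne'
    have h2kt : (2 : ℝ≥0∞) ^ k ≠ ∞ := (ENNReal.zpow_lt_top (by norm_num) (by norm_num) k).ne
    have hk1 : (2 : ℝ≥0∞) ^ (k + 1) = 2 * 2 ^ k := by
      rw [ENNReal.zpow_add (by norm_num) (by norm_num), zpow_one, mul_comm]
    have hkm : (2 : ℝ≥0∞) ^ k = 2 * 2 ^ (k - 1) := by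
      conv_lhs => rw [show k = (k - 1) + 1 by ring]
      rw [ENNReal.zpow_add (by norm_num) (by norm_num), zpow_one, mul_comm]
    have hFx : F x ≠ ∞ := ne_top_of_le_ne_top (by rw [hk1]; exact ENNReal.mul_ne_top (by norm_num) h2kt) hx2
    obtain ⟨y, hxy, hFy⟩ := hardy_ivt f hf x (2 ^ k) h2k0 hx1 hFx
    -- intermediate level
    set m : ℝ≥0∞ := 2 ^ (k - 1) with hm
    have hm0 : m ≠ 0 := (ENNReal.zpow_pos (by norm_num) (by norm_num) _).ne'
    have hmt : m ≠ ∞ := (ENNReal.zpow_lt_top (by norm_num) (by norm_num) _).ne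
    have hmh0 : m / 2 ≠ 0 := (ENNReal.half_pos hm0).ne'
    have hmht : m / 2 ≠ ∞ := (ENNReal.div_lt_top hmt (by norm_num)).ne
    have hmm : m / 2 + m / 2 = m := ENNReal.add_halves m
    have hs2 : m + m / 2 < 2 ^ k := by
      rw [hkm, two_mul]
      exact ENNReal.add_lt_add_left hmt (ENNReal.half_lt_self hm0 hmt)
    obtain ⟨z, hyz, hFz⟩ := hardy_ivt f hf y (m + m / 2) (by simp [hm0]) (by rw [hFy]; exact hs2)
      (by rw [hFy]; exact h2kt)
    have hy0 : 0 < y := hx0.trans_le hxy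
    have hsplit : ∫⁻ t in Ioi y, f t = (∫⁻ t in Ioc y z, f t) + ∫⁻ t in Ioi z, f t := by
      rw [← lintegral_union measurableSet_Ioi (Ioc_disjoint_Ioi le_rfl), Ioc_union_Ioi_eq_Ioi hyz]
    have hI : ∫⁻ t in Ioc y z, f t = m / 2 := by
      rw [hFy, hFz, hkm, two_mul] at hsplit
      have : m / 2 + (m + m / 2) = (∫⁻ t in Ioc y z, f t) + (m + m / 2) := by
        rw [← hsplit]; nth_rewrite 4 [← hmm]; ring
      exact ((ENNReal.add_left_inj (by simp [hmt, hmht])).1 this).symm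
    have hEsub : E k ⊆ Ioc 0 y := by
      rintro t ⟨ht0, ht1, _⟩
      refine ⟨ht0, ?_⟩
      by_contra hcon
      have : F t ≤ F y := hFanti (not_le.1 hcon).le
      have hFy' : F y = 2 ^ k := hFy
      rw [hFy'] at this
      exact absurd ht1 (not_lt.2 this)
    have hAsub : Ioc y z ⊆ E (k - 1) := by
      rintro t ⟨ht1, ht2⟩
      refine ⟨hy0.trans ht1, ?_, ?_⟩
      · have : F z ≤ F t := hFanti ht2
        refine lt_of_lt_of_le ?_ this
        have hFz' : F z = m + m / 2 := hFz
        rw [hFz']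
        exact ENNReal.lt_add_right hmt hmh0
      · rw [sub_add_cancel, ← hFy]
        exact hFanti ht1.le
    have hblock := hardy_block p q hp hpq u v f hv hf hvt B hB hUV y hy0 (Ioc y z)
      Ioc_subset_Ioi_self
    rw [hI] at hblock
    have h8 : (2 : ℝ≥0∞) ^ (k + 1) = 8 * (m / 2) := by
      rw [hk1, hkm]
      nth_rewrite 1 [← hmm]; ring
    calc ∫⁻ x in E k, (u x * F x) ^ q ≤ ∫⁻ x in E k, (8 * (m / 2)) ^ q * u x ^ q := by
          refine setLIntegral_mono' (hEm k) fun t ht => ?_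
          rw [ENNReal.mul_rpow_of_nonneg _ _ hq0.le, mul_comm, ← h8]
          gcongr
          exact ht.2.2
      _ = (8 * (m / 2)) ^ q * ∫⁻ x in E k, u x ^ q := lintegral_const_mul _ (hu.pow_const _)
      _ ≤ (8 * (m / 2)) ^ q * ∫⁻ x in Ioc 0 y, u x ^ q := by
          gcongr
      _ = (8 * ((m / 2) * (∫⁻ x in Ioc 0 y, u x ^ q) ^ (1 / q))) ^ q := by
          rw [← mul_assoc, ENNReal.mul_rpow_of_nonneg (8 * (m / 2)) _ hq0.le, ← ENNReal.rpow_mul,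
            one_div_mul_cancel hq0.ne', ENNReal.rpow_one]
      _ ≤ (8 * (B * (∫⁻ t in E (k - 1), (f t * v t) ^ p) ^ (1 / p))) ^ q := by
          refine ENNReal.rpow_le_rpow (mul_le_mul_right (hblock.trans ?_) _) hq0.le
          gcongr
      _ = _ := by
          rw [← mul_assoc, ENNReal.mul_rpow_of_nonneg _ _ hq0.le, ← ENNReal.rpow_mul,
            one_div_mul_eq_div]
  have hmain : ∫⁻ x in Ioi (0 : ℝ), (u x * F x) ^ q ≤
      (8 * B) ^ q * (∫⁻ x in Ioi 0, (f x * v x) ^ p) ^ (q / p) := by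
    calc _ ≤ ∫⁻ x in (Z ∪ S) ∪ ⋃ k, E k, (u x * F x) ^ q := lintegral_mono_set hcover
      _ ≤ (∫⁻ x in Z ∪ S, (u x * F x) ^ q) + ∫⁻ x in ⋃ k, E k, (u x * F x) ^ q :=
          lintegral_union_le _ _ _
      _ ≤ ((∫⁻ x in Z, (u x * F x) ^ q) + ∫⁻ x in S, (u x * F x) ^ q) +
            ∑' k, ∫⁻ x in E k, (u x * F x) ^ q :=
          add_le_add (lintegral_union_le _ _ _) (lintegral_iUnion_le _ _)
      _ = ∑' k, ∫⁻ x in E k, (u x * F x) ^ q := by rw [hZ, hS]; simp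
      _ ≤ ∑' k : ℤ, (8 * B) ^ q * (∫⁻ x in E (k - 1), (f x * v x) ^ p) ^ (q / p) :=
          ENNReal.tsum_le_tsum hE
      _ = (8 * B) ^ q * ∑' k : ℤ, (∫⁻ x in E (k - 1), (f x * v x) ^ p) ^ (q / p) :=
          ENNReal.tsum_mul_left
      _ = (8 * B) ^ q * ∑' k : ℤ, (∫⁻ x in E k, (f x * v x) ^ p) ^ (q / p) := by
          congr 1
          exact (Equiv.subRight (1 : ℤ)).tsum_eq
            (fun k => (∫⁻ x in E k, (f x * v x) ^ p) ^ (q / p))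
      _ ≤ (8 * B) ^ q * (∑' k : ℤ, ∫⁻ x in E k, (f x * v x) ^ p) ^ (q / p) := by
          gcongr
          exact hardy_tsum _ _ ((one_le_div hp0).2 hpq)
      _ ≤ _ := by
          rw [← lintegral_iUnion hEm hEd]
          gcongr
          exact iUnion_subset fun k => inter_subset_left
  calc _ ≤ ((8 * B) ^ q * (∫⁻ x in Ioi 0, (f x * v x) ^ p) ^ (q / p)) ^ (1 / q) := by
        gcongr
    _ = _ := by
        rw [ENNReal.mul_rpow_of_nonneg _ _ (by positivity), ← ENNReal.rpow_mul, ← ENNReal.rpow_mul,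
          mul_one_div_cancel hq0.ne', ENNReal.rpow_one]
        congr 2
        field_simp

lemma hardy_nec (p q : ℝ) (hp : 1 < p) (hpq : p ≤ q) (u v : ℝ → ℝ≥0∞)
    (hu : Measurable u) (hv : Measurable v) (hvt : ∀ x, v x ≠ ∞) (c : ℝ≥0∞)
    (h : ∀ f : ℝ → ℝ≥0∞, Measurable f → (∀ x, f x ≠ ∞) →
      (∫⁻ x in Ioi (0 : ℝ), (u x * ∫⁻ t in Ioi x, f t) ^ q) ^ (1 / q) ≤
      c * (∫⁻ x in Ioi 0, (f x * v x) ^ p) ^ (1 / p)) (r : ℝ) (hr : 0 < r) :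
    (∫⁻ x in Ioc 0 r, u x ^ q) ^ (1 / q) *
      (∫⁻ x in Ioi r, v x ^ (-(p / (p - 1)))) ^ ((p - 1) / p) ≤ c := by
  have hp0 : 0 < p := by linarith
  have hq0 : 0 < q := by linarith
  have hp1 : 0 < p - 1 := by linarith
  have hp' : 0 < (p - 1) / p := div_pos hp1 hp0
  set g : ℝ → ℝ≥0∞ := fun x => v x ^ (-(p / (p - 1))) with hg
  have hgm : Measurable g := hv.pow_const _
  let F : ℕ → ℝ → ℝ≥0∞ := fun n => (Ioc r (r + n)).indicator (fun x => min (g x) n)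
  have hFm : ∀ n, Measurable (F n) := fun n =>
    (hgm.min measurable_const).indicator measurableSet_Ioc
  have hFmono : Monotone F := by
    intro a b hab x
    have hab' : (a : ℝ) ≤ b := by exact_mod_cast hab
    have hab'' : (a : ℝ≥0∞) ≤ b := by exact_mod_cast hab
    simp only [F]
    by_cases hx : x ∈ Ioc r (r + a)
    · have hx' : x ∈ Ioc r (r + b) := ⟨hx.1, hx.2.trans (by linarith)⟩
      rw [indicator_of_mem hx, indicator_of_mem hx']
      exact min_le_min_left _ hab''
    · rw [indicator_of_notMem hx]; exact zero_le
  have hFt : ∀ n x, F n x ≤ n := by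
    intro n x
    by_cases hx : x ∈ Ioc r (r + n)
    · simp only [F, indicator_of_mem hx]; exact min_le_right _ _
    · simp only [F, indicator_of_notMem hx]; exact zero_le
  have hFg : ∀ n x, F n x ≤ g x := by
    intro n x
    by_cases hx : x ∈ Ioc r (r + n)
    · simp only [F, indicator_of_mem hx]; exact min_le_left _ _
    · simp only [F, indicator_of_notMem hx]; exact zero_le
  have hFint : ∀ n, ∫⁻ x in Ioi r, F n x ≠ ∞ := by
    intro n
    have : ∫⁻ x in Ioi r, F n x ≤ ∫⁻ x, (Ioc r (r + n)).indicator (fun _ => (n : ℝ≥0∞)) x := by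
      refine (setLIntegral_le_lintegral _ _).trans (lintegral_mono fun x => ?_)
      by_cases hx : x ∈ Ioc r (r + n)
      · rw [indicator_of_mem hx]; exact hFt n x
      · simp only [F, indicator_of_notMem hx]; exact le_rfl
    refine ne_top_of_le_ne_top ?_ this
    rw [lintegral_indicator measurableSet_Ioc]
    simp
    exact ENNReal.mul_ne_top (by simp) (by simp)
  have hFv : ∀ n x, (F n x * v x) ^ p ≤ F n x := by
    intro n x
    by_cases hv0 : v x = 0
    · simp [hv0, hp0]
    have h1 : (F n x) ^ (p - 1) * v x ^ p ≤ 1 := by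
      calc (F n x) ^ (p - 1) * v x ^ p ≤ (g x) ^ (p - 1) * v x ^ p := by
            gcongr; exact hFg n x
        _ = 1 := by
            simp only [hg]
            rw [← ENNReal.rpow_mul, ← ENNReal.rpow_add _ _ hv0 (hvt x)]
            rw [show -(p / (p - 1)) * (p - 1) + p = 0 by field_simp; ring, ENNReal.rpow_zero]
    calc (F n x * v x) ^ p = F n x * ((F n x) ^ (p - 1) * v x ^ p) := by
          rw [ENNReal.mul_rpow_of_nonneg _ _ hp0.le, ← mul_assoc]
          congr 1
          conv_lhs => rw [show p = 1 + (p - 1) by ring]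
          rw [ENNReal.rpow_add_of_nonneg _ _ (by norm_num) hp1.le, ENNReal.rpow_one]
      _ ≤ F n x * 1 := by gcongr
      _ = F n x := mul_one _
  have hstep : ∀ n, (∫⁻ x in Ioc 0 r, u x ^ q) ^ (1 / q) *
      (∫⁻ x in Ioi r, F n x) ^ ((p - 1) / p) ≤ c := by
    intro n
    set I := ∫⁻ x in Ioi r, F n x with hI
    by_cases hI0 : I = 0
    · rw [hI0, ENNReal.zero_rpow_of_pos hp']; simp
    have hIt : I ≠ ∞ := hFint n
    have h1 := h (F n) (hFm n) (fun x => ne_top_of_le_ne_top (by simp) (hFt n x))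
    have hL : (∫⁻ x in Ioc 0 r, u x ^ q) ^ (1 / q) * I ≤
        (∫⁻ x in Ioi (0 : ℝ), (u x * ∫⁻ t in Ioi x, F n t) ^ q) ^ (1 / q) := by
      calc _ = ((∫⁻ x in Ioc 0 r, u x ^ q) * I ^ q) ^ (1 / q) := by
            rw [ENNReal.mul_rpow_of_nonneg _ _ (by positivity), ← ENNReal.rpow_mul,
              mul_one_div_cancel hq0.ne', ENNReal.rpow_one]
        _ = (∫⁻ x in Ioc 0 r, u x ^ q * I ^ q) ^ (1 / q) := by
            rw [lintegral_mul_const _ (hu.pow_const _)]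
        _ ≤ (∫⁻ x in Ioc 0 r, (u x * ∫⁻ t in Ioi x, F n t) ^ q) ^ (1 / q) := by
            refine ENNReal.rpow_le_rpow ?_ (by positivity)
            refine setLIntegral_mono' measurableSet_Ioc fun x hx => ?_
            rw [← ENNReal.mul_rpow_of_nonneg _ _ hq0.le]
            gcongr
            exact lintegral_mono_set (Ioi_subset_Ioi hx.2)
        _ ≤ _ := by
            gcongr
            exact Ioc_subset_Ioi_self
    have hRR : ∫⁻ x in Ioi 0, (F n x * v x) ^ p ≤ I := by
      calc _ ≤ ∫⁻ x in Ioi 0, F n x := lintegral_mono fun x => hFv n x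
        _ ≤ ∫⁻ x, F n x := setLIntegral_le_lintegral _ _
        _ = ∫⁻ x, (Ioi r).indicator (F n) x := by
            congr 1
            ext x
            by_cases hx : x ∈ Ioi r
            · rw [indicator_of_mem hx]
            · rw [indicator_of_notMem hx]
              exact indicator_of_notMem (fun hx' => hx hx'.1) _
        _ = I := lintegral_indicator measurableSet_Ioi _
    have h2 : (∫⁻ x in Ioc 0 r, u x ^ q) ^ (1 / q) * I ≤ c * I ^ (1 / p) :=
      hL.trans (h1.trans (by gcongr))
    have hsum : I = I ^ ((p - 1) / p) * I ^ (1 / p) := by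
      rw [← ENNReal.rpow_add _ _ hI0 hIt, ← add_div, sub_add_cancel, div_self hp0.ne',
        ENNReal.rpow_one]
    have h3 : ((∫⁻ x in Ioc 0 r, u x ^ q) ^ (1 / q) * I ^ ((p - 1) / p)) * I ^ (1 / p) ≤
        c * I ^ (1 / p) := by
      rw [mul_assoc, ← hsum]; exact h2
    have hne0 : I ^ (1 / p) ≠ 0 := by
      simp [ENNReal.rpow_eq_zero_iff, hI0, hIt]
    have hnet : I ^ (1 / p) ≠ ∞ := ENNReal.rpow_ne_top_of_nonneg (by positivity) hIt
    exact (ENNReal.mul_le_mul_iff_left hne0 hnet).1 h3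
  have hlim : ∫⁻ x in Ioi r, g x = ⨆ n, ∫⁻ x in Ioi r, F n x := by
    rw [← lintegral_iSup hFm hFmono]
    refine setLIntegral_congr_fun measurableSet_Ioi fun x hx => ?_
    refine le_antisymm ?_ (iSup_le fun n => hFg n x)
    refine le_of_forall_lt fun b hb => ?_
    obtain ⟨n1, hn1⟩ := ENNReal.exists_nat_gt (ne_top_of_lt hb)
    obtain ⟨n2, hn2⟩ := exists_nat_ge (x - r)
    refine lt_of_lt_of_le ?_ (le_iSup _ (max n1 n2))
    have hmem : x ∈ Ioc r (r + (max n1 n2 : ℕ)) := by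
      refine ⟨hx, ?_⟩
      have : (n2 : ℝ) ≤ (max n1 n2 : ℕ) := by exact_mod_cast le_max_right _ _
      linarith
    simp only [F]
    rw [indicator_of_mem hmem]
    refine lt_min hb (hn1.trans_le ?_)
    exact_mod_cast le_max_left _ _
  rw [hlim]
  have hmonoI : Monotone fun n => ∫⁻ x in Ioi r, F n x := fun a b hab =>
    lintegral_mono (hFmono hab)
  have hpow : (⨆ n, ∫⁻ x in Ioi r, F n x) ^ ((p - 1) / p) =
      ⨆ n, (∫⁻ x in Ioi r, F n x) ^ ((p - 1) / p) :=
    (ENNReal.orderIsoRpow _ hp').map_iSup _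
  rw [hpow, ENNReal.mul_iSup]
  exact iSup_le hstep

/-- Bradley's dual weighted Hardy inequality with mixed norms: for `1 < p ≤ q < ∞`
the inequality
`(∫₀^∞ [u(x) ∫_x^∞ f]^q)^{1/q} ≤ c (∫₀^∞ [f v]^p)^{1/p}`
holds for all nonnegative measurable `f` iff
`sup_{r>0} (∫₀^r u^q)^{1/q} (∫_r^∞ v^{-p'})^{1/p'} < ∞`. -/
theorem stmt_7 (p q : ℝ) (hp : 1 < p) (hpq : p ≤ q)
    (u v : ℝ → ℝ) (hu : Measurable u) (hv : Measurable v)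
    (hu0 : ∀ x ∈ Ioi (0 : ℝ), 0 ≤ u x) (hv0 : ∀ x ∈ Ioi (0 : ℝ), 0 ≤ v x) :
    (∃ c : ℝ, 0 < c ∧ ∀ f : ℝ → ℝ, Measurable f → (∀ x ∈ Ioi (0 : ℝ), 0 ≤ f x) →
      (∫⁻ x in Ioi (0 : ℝ),
          (ENNReal.ofReal (u x) * ∫⁻ t in Ioi x, ENNReal.ofReal (f t)) ^ q) ^ (1 / q) ≤
        ENNReal.ofReal c *
          (∫⁻ x in Ioi (0 : ℝ), (ENNReal.ofReal (f x) * ENNReal.ofReal (v x)) ^ p) ^ (1 / p)) ↔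
    (⨆ r ∈ Ioi (0 : ℝ),
      (∫⁻ x in Ioc (0 : ℝ) r, ENNReal.ofReal (u x) ^ q) ^ (1 / q) *
        (∫⁻ x in Ioi r, ENNReal.ofReal (v x) ^ (-(p / (p - 1)))) ^ ((p - 1) / p)) < ∞ := by
  constructor
  · rintro ⟨c, hc, h⟩
    refine lt_of_le_of_lt (iSup₂_le fun r hr => ?_) (ENNReal.ofReal_lt_top (r := c))
    refine hardy_nec p q hp hpq (fun x => ENNReal.ofReal (u x)) (fun x => ENNReal.ofReal (v x))
      hu.ennreal_ofReal hv.ennreal_ofReal (fun x => ENNReal.ofReal_ne_top) _ ?_ r hr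
    intro f hf hft
    have := h (fun x => (f x).toReal) hf.ennreal_toReal (fun x _ => ENNReal.toReal_nonneg)
    simpa only [ENNReal.ofReal_toReal (hft _)] using this
  · intro hB
    set B := ⨆ r ∈ Ioi (0 : ℝ),
      (∫⁻ x in Ioc (0 : ℝ) r, ENNReal.ofReal (u x) ^ q) ^ (1 / q) *
        (∫⁻ x in Ioi r, ENNReal.ofReal (v x) ^ (-(p / (p - 1)))) ^ ((p - 1) / p) with hBdef
    have hUV : ∀ r : ℝ, 0 < r → (∫⁻ x in Ioc 0 r, ENNReal.ofReal (u x) ^ q) ^ (1 / q) *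
      (∫⁻ x in Ioi r, ENNReal.ofReal (v x) ^ (-(p / (p - 1)))) ^ ((p - 1) / p) ≤ B := by
      intro r hr
      rw [hBdef]
      exact le_iSup₂_of_le r hr le_rfl
    have h8 : 8 * B ≠ ∞ := ENNReal.mul_ne_top (by norm_num) hB.ne
    have hcpos : 0 < (8 * B).toReal + 1 := by positivity
    refine ⟨(8 * B).toReal + 1, hcpos, fun f hf _ => ?_⟩
    by_cases hR : ∫⁻ x in Ioi (0 : ℝ), (ENNReal.ofReal (f x) * ENNReal.ofReal (v x)) ^ p = ∞
    · rw [hR, ENNReal.top_rpow_of_pos (by positivity),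
        ENNReal.mul_top (ENNReal.ofReal_pos.2 hcpos).ne']
      exact le_top
    refine (hardy_suff p q hp hpq (fun x => ENNReal.ofReal (u x)) (fun x => ENNReal.ofReal (v x))
      (fun x => ENNReal.ofReal (f x)) hu.ennreal_ofReal hv.ennreal_ofReal hf.ennreal_ofReal
      (fun x => ENNReal.ofReal_ne_top) B hB.ne hUV hR).trans ?_
    gcongr
    rw [← ENNReal.ofReal_toReal h8]
    exact ENNReal.ofReal_le_ofReal (by simp)
end

section
/- Let n ≥ 2, 1 < p < n, and 1 ≤ q ≤ ∞. Then there exists a constant c = c(n,p,q) > 0 such that for every smooth compactly supported f : ℝⁿ → ℝ, ‖f‖_{np/(n-p), q} ≤ c ‖ |∇f| ‖_{p,q}. -/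
open MeasureTheory Set ENNReal

/-- The distribution function `μ_f(λ) = μ{x : |f x| > λ}` of a function. -/
noncomputable def distribFn {α : Type*} [MeasurableSpace α] (μ : Measure α)
    (f : α → ℝ) (l : ℝ≥0∞) : ℝ≥0∞ :=
  μ {x | l < ENNReal.ofReal |f x|}

/-- The decreasing rearrangement `f*(t) = inf {λ > 0 : μ_f(λ) ≤ t}`. -/
noncomputable def rearr {α : Type*} [MeasurableSpace α] (μ : Measure α)
    (f : α → ℝ) (t : ℝ) : ℝ≥0∞ :=
  sInf {l : ℝ≥0∞ | 0 < l ∧ distribFn μ f l ≤ ENNReal.ofReal t}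

/-- The Lorentz `L^{p,q}` (quasi)norm
`‖f‖_{p,q} = (∫₀^∞ (t^{1/p} f*(t))^q dt/t)^{1/q}` for `q < ∞`, and
`‖f‖_{p,∞} = sup_{t>0} t^{1/p} f*(t)`. -/
noncomputable def lorentz {α : Type*} [MeasurableSpace α] (μ : Measure α)
    (p q : ℝ≥0∞) (f : α → ℝ) : ℝ≥0∞ :=
  if q = ∞ then ⨆ t ∈ Ioi (0 : ℝ), ENNReal.ofReal t ^ p.toReal⁻¹ * rearr μ f t
  else (∫⁻ t in Ioi (0 : ℝ),
      (ENNReal.ofReal t ^ p.toReal⁻¹ * rearr μ f t) ^ q.toReal / ENNReal.ofReal t) ^ q.toReal⁻¹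

theorem rearr_distrib {α : Type*} [MeasurableSpace α] (μ : Measure α) (f : α → ℝ) (t : ℝ) :
    distribFn μ f (rearr μ f t) ≤ ENNReal.ofReal t := by
  have hne : {l : ℝ≥0∞ | 0 < l ∧ distribFn μ f l ≤ ENNReal.ofReal t}.Nonempty :=
    ⟨⊤, by simp [distribFn]⟩
  obtain ⟨u, hu, hlim, hmem⟩ := exists_seq_tendsto_sInf hne (OrderBot.bddBelow _)
  change Filter.Tendsto u Filter.atTop (nhds (rearr μ f t)) at hlim
  have hsub : {x | rearr μ f t < ENNReal.ofReal |f x|} ⊆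
      ⋃ k, {x | u k < ENNReal.ofReal |f x|} := by
    intro x hx
    obtain ⟨k, hk⟩ := (hlim.eventually (gt_mem_nhds hx)).exists
    exact mem_iUnion.2 ⟨k, hk⟩
  have hmono : Monotone fun k => {x | u k < ENNReal.ofReal |f x|} := by
    intro i j hij x hx
    exact lt_of_le_of_lt (hu hij) hx
  refine (measure_mono hsub).trans ?_
  rw [hmono.measure_iUnion]
  exact iSup_le fun k => (hmem k).2

theorem rearr_antitone {α : Type*} [MeasurableSpace α] (μ : Measure α) (f : α → ℝ) :
    Antitone (rearr μ f) := by
  intro s t hst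
  exact sInf_le_sInf fun l hl => ⟨hl.1, hl.2.trans (ENNReal.ofReal_le_ofReal hst)⟩

theorem lt_distrib_of_lt_rearr {α : Type*} [MeasurableSpace α] (μ : Measure α) (f : α → ℝ) (t : ℝ)
    {b : ℝ≥0∞} (hb0 : 0 < b) (hb : b < rearr μ f t) : ENNReal.ofReal t < distribFn μ f b := by
  by_contra h
  exact absurd (sInf_le (show b ∈ {l : ℝ≥0∞ | 0 < l ∧ distribFn μ f l ≤ ENNReal.ofReal t} from
    ⟨hb0, not_lt.1 h⟩)) (not_le.2 hb)

theorem setLIntegral_le_tsum {α : Type*} [MeasurableSpace α] (μ : Measure α) (g : α → ℝ)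
    (hg : Measurable g) (A : Set α) (hA : MeasurableSet A) (T : ℝ) (hT : 0 < T)
    (hAT : μ A ≤ ENNReal.ofReal T) :
    ∫⁻ x in A, ENNReal.ofReal |g x| ∂μ ≤
      2 * ∑' j : ℕ, ENNReal.ofReal (T / 2 ^ j) * rearr μ g (T / 2 ^ j) := by
  set G : α → ℝ≥0∞ := fun x => ENNReal.ofReal |g x| with hG
  have hGm : Measurable G := by fun_prop
  set c : ℕ → ℝ≥0∞ := fun j => rearr μ g (T / 2 ^ j) with hc
  have hE : ∀ j, μ {x | c j < G x} ≤ ENNReal.ofReal (T / 2 ^ j) := fun j =>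
    rearr_distrib μ g _
  have hEm : ∀ j, MeasurableSet {x | c j < G x} := fun j => measurableSet_lt measurable_const hGm
  have hnull : ∀ᵐ x ∂μ, ∃ j, G x ≤ c j := by
    have : μ (⋂ j, {x | c j < G x}) = 0 := by
      have hl : Filter.Tendsto (fun j : ℕ => ENNReal.ofReal (T / 2 ^ j)) Filter.atTop (nhds 0) := by
        have : Filter.Tendsto (fun j : ℕ => T / 2 ^ j) Filter.atTop (nhds 0) := by
          have := (tendsto_pow_atTop_nhds_zero_of_lt_one (r := (1/2:ℝ)) (by norm_num)
            (by norm_num)).const_mul T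
          simpa [div_eq_mul_inv] using this
        simpa using ENNReal.tendsto_ofReal this
      refine le_antisymm (ge_of_tendsto' hl fun j => ?_) (zero_le)
      exact (measure_mono (iInter_subset _ j)).trans (hE j)
    rw [ae_iff]
    convert this using 2
    ext x; simp
  have hpt : ∀ᵐ x ∂μ, A.indicator G x ≤ A.indicator (fun _ => c 0) x +
      ∑' j, {x | c j < G x}.indicator (fun _ => c (j+1)) x := by
    filter_upwards [hnull] with x hx
    by_cases hxA : x ∈ A
    swap
    · simp [hxA]
    rw [indicator_of_mem hxA, indicator_of_mem hxA]
    classical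
    have h1 := Nat.find_spec hx
    have h2 := fun m (hm : m < Nat.find hx) => Nat.find_min hx hm
    rcases hk : Nat.find hx with _ | k
    · rw [hk] at h1
      exact h1.trans le_self_add
    · rw [hk] at h1 h2
      refine le_trans ?_ le_add_self
      refine le_trans ?_ (ENNReal.le_tsum k)
      rw [indicator_of_mem (show x ∈ {x | c k < G x} from not_le.1 (h2 k (by omega)))]
      exact h1
  rw [← lintegral_indicator hA]
  refine (lintegral_mono_ae hpt).trans ?_
  rw [lintegral_add_left (measurable_const.indicator hA), lintegral_tsum
    (fun j => (measurable_const.indicator (hEm j)).aemeasurable), lintegral_indicator_const hA]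
  simp_rw [lintegral_indicator_const (hEm _)]
  rw [tsum_eq_zero_add' (f := fun j : ℕ => ENNReal.ofReal (T / 2 ^ j) * rearr μ g (T / 2 ^ j))
    ENNReal.summable, mul_add, ← ENNReal.tsum_mul_left]
  refine add_le_add ?_ (ENNReal.tsum_le_tsum fun j => ?_)
  · calc c 0 * μ A ≤ c 0 * ENNReal.ofReal T := by gcongr
      _ = 1 * (ENNReal.ofReal (T / 2 ^ 0) * rearr μ g (T / 2 ^ 0)) := by
        simp [hc, mul_comm]
      _ ≤ _ := by gcongr; norm_num
  · calc c (j+1) * μ {x | c j < G x} ≤ c (j+1) * ENNReal.ofReal (T / 2 ^ j) := by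
          gcongr; exact hE j
      _ = _ := by
        have : T / 2 ^ j = 2 * (T / 2 ^ (j+1)) := by rw [pow_succ]; field_simp
        rw [this, ENNReal.ofReal_mul (by norm_num)]
        simp only [hc, ENNReal.ofReal_ofNat]
        ring

theorem smoothTransition_deriv_bound : ∃ M : ℝ, 0 < M ∧
    ∀ x, |deriv Real.smoothTransition x| ≤ M := by
  have hc : Continuous (deriv Real.smoothTransition) :=
    (Real.smoothTransition.contDiff (n := 1)).continuous_deriv le_rfl
  obtain ⟨M, hM⟩ := (isCompact_Icc (a := (0:ℝ)) (b := 1)).exists_bound_of_continuousOn hc.continuousOn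
  refine ⟨max M 1, by positivity, fun x => ?_⟩
  by_cases hx : x ∈ Icc (0:ℝ) 1
  · exact (hM x hx).trans (le_max_left _ _)
  have : deriv Real.smoothTransition x = 0 := by
    rw [mem_Icc, not_and_or, not_le, not_le] at hx
    rcases hx with hx | hx
    · apply IsLocalMin.deriv_eq_zero
      refine Filter.Eventually.of_forall fun y => ?_
      rw [Real.smoothTransition.zero_of_nonpos hx.le]
      exact Real.smoothTransition.nonneg y
    · apply IsLocalMax.deriv_eq_zero
      refine Filter.Eventually.of_forall fun y => ?_
      rw [Real.smoothTransition.one_of_one_le hx.le]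
      exact Real.smoothTransition.le_one y
  rw [this]; simp

theorem jensen_tsum {ι : Type*} (w z : ι → ℝ≥0∞) (hW : ∑' i, w i ≠ ⊤) {q : ℝ} (hq : 1 ≤ q) :
    (∑' i, w i * z i) ^ q ≤ (∑' i, w i) ^ (q - 1) * ∑' i, w i * z i ^ q := by
  have hq0 : 0 < q := by linarith
  rw [← ENNReal.le_rpow_inv_iff hq0, ENNReal.tsum_eq_iSup_sum]
  refine iSup_le fun s => ?_
  rw [ENNReal.le_rpow_inv_iff hq0]
  set S := ∑ i ∈ s, w i with hS
  have hSle : S ≤ ∑' i, w i := ENNReal.sum_le_tsum s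
  have hSt : S ≠ ⊤ := ne_top_of_le_ne_top hW hSle
  have key : (∑ i ∈ s, w i * z i) ^ q ≤ S ^ (q-1) * ∑ i ∈ s, w i * z i ^ q := by
    by_cases h0 : S = 0
    · have : ∀ i ∈ s, w i = 0 := by
        simpa [hS, Finset.sum_eq_zero_iff] using h0
      rw [Finset.sum_eq_zero (fun i hi => by rw [this i hi, zero_mul])]
      rw [ENNReal.zero_rpow_of_pos hq0]; exact zero_le
    · have h := ENNReal.rpow_arith_mean_le_arith_mean_rpow s (fun i => S⁻¹ * w i) z
        (by rw [← Finset.mul_sum]; exact ENNReal.inv_mul_cancel h0 hSt) hq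
      simp_rw [mul_assoc] at h
      rw [← Finset.mul_sum, ← Finset.mul_sum, ENNReal.mul_rpow_of_nonneg _ _ hq0.le] at h
      have h' := mul_le_mul_right h (S ^ q)
      rw [← mul_assoc, ← mul_assoc, ← ENNReal.mul_rpow_of_nonneg _ _ hq0.le,
        ENNReal.mul_inv_cancel h0 hSt, ENNReal.one_rpow, one_mul] at h'
      rwa [ENNReal.rpow_sub _ _ h0 hSt, ENNReal.rpow_one, div_eq_mul_inv]
  refine key.trans ?_
  have hq1 : 0 ≤ q - 1 := by linarith
  gcongr
  exact ENNReal.sum_le_tsum s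

theorem lintegral_scale (H : ℝ → ℝ≥0∞) (hH : Measurable H) (c : ℝ) (hc : 0 < c) :
    ∫⁻ t in Ioi (0:ℝ), H (c * t) / ENNReal.ofReal t = ∫⁻ t in Ioi (0:ℝ), H t / ENNReal.ofReal t := by
  have hm : Measurable fun t => (Ioi (0:ℝ)).indicator (fun t => H t / ENNReal.ofReal t) t :=
    Measurable.indicator (by fun_prop) measurableSet_Ioi
  rw [← lintegral_indicator measurableSet_Ioi, ← lintegral_indicator measurableSet_Ioi]
  conv_rhs => rw [← Real.smul_map_volume_mul_left hc.ne', lintegral_smul_measure,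
    lintegral_map hm (by fun_prop)]
  have hm2 : Measurable fun t => (Ioi (0:ℝ)).indicator (fun t => H t / ENNReal.ofReal t) (c * t) :=
    hm.comp (by fun_prop)
  rw [smul_eq_mul, ← lintegral_const_mul _ hm2, abs_of_pos hc]
  congr 1
  ext t
  by_cases ht : 0 < t
  · rw [indicator_of_mem (mem_Ioi.2 ht), indicator_of_mem (mem_Ioi.2 (by positivity)),
      ENNReal.ofReal_mul hc.le, div_eq_mul_inv, div_eq_mul_inv, ENNReal.mul_inv (by simp [hc]) (by simp)]
    have h1 : ENNReal.ofReal c ≠ 0 := by simp [hc]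
    calc _ = (ENNReal.ofReal c * (ENNReal.ofReal c)⁻¹) * (H (c*t) * (ENNReal.ofReal t)⁻¹) := by
            rw [ENNReal.mul_inv_cancel h1 (by simp), one_mul]
      _ = _ := by ring
  · rw [indicator_of_notMem (by simpa using ht), indicator_of_notMem, mul_zero]
    simp only [mem_Ioi, not_lt] at ht ⊢
    nlinarith

theorem trunc_bound (n : ℕ) (hn : 2 ≤ n) : ∃ C : ℝ≥0∞, C ≠ ⊤ ∧
    ∀ f : EuclideanSpace ℝ (Fin n) → ℝ, ContDiff ℝ (⊤ : ℕ∞) f → HasCompactSupport f →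
    ∀ a b t : ℝ, 0 < a → a < b → ENNReal.ofReal t ≤ volume {x | b < |f x|} →
      ENNReal.ofReal (b - a) * ENNReal.ofReal t ^ (1 - (n:ℝ)⁻¹) ≤
        C * ∫⁻ x in {x | a < |f x|}, ‖fderiv ℝ f x‖ₑ := by
  obtain ⟨M, hM0, hM⟩ := smoothTransition_deriv_bound
  have hn' : (1:ℝ) < n := by exact_mod_cast hn
  have hconj := Real.HolderConjugate.conjExponent hn'
  set r : ℝ := Real.conjExponent n with hr
  have hr0 : 0 < r := hconj.symm.pos
  have hrinv : r⁻¹ = 1 - (n:ℝ)⁻¹ := by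
    have := hconj.inv_add_inv_eq_one
    linarith
  set K := lintegralPowLePowLIntegralFDerivConst
    (volume : Measure (EuclideanSpace ℝ (Fin n))) r with hK
  refine ⟨(K : ℝ≥0∞) ^ r⁻¹ * ENNReal.ofReal (2 * M),
    ENNReal.mul_ne_top (ENNReal.rpow_ne_top_of_nonneg (by positivity) (by simp)) ENNReal.ofReal_ne_top, ?_⟩
  intro f hf hfc a b t ha hab ht
  have hd : 0 < b - a := by linarith
  set S := Real.smoothTransition with hSdef
  set ψ : ℝ → ℝ := fun s => S ((s - a) / (b - a)) + S ((-s - a) / (b - a)) with hψ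
  have hSc : ContDiff ℝ 1 S := Real.smoothTransition.contDiff (n := 1)
  have hψc : ContDiff ℝ 1 ψ := by
    apply ContDiff.add
    · exact hSc.comp (by fun_prop)
    · exact hSc.comp (by fun_prop)
  have hψ0 : ∀ s, |s| ≤ a → ψ s = 0 := by
    intro s hs
    rw [abs_le] at hs
    simp only [hψ, hSdef]
    rw [Real.smoothTransition.zero_of_nonpos (div_nonpos_of_nonpos_of_nonneg (by linarith) hd.le),
      Real.smoothTransition.zero_of_nonpos (div_nonpos_of_nonpos_of_nonneg (by linarith) hd.le),
      add_zero]
  have hψnn : ∀ s, 0 ≤ ψ s := fun s =>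
    add_nonneg (Real.smoothTransition.nonneg _) (Real.smoothTransition.nonneg _)
  have hψ1 : ∀ s, b < |s| → 1 ≤ ψ s := by
    intro s hs
    rcases lt_abs.1 hs with h | h
    · have : S ((s - a) / (b - a)) = 1 :=
        Real.smoothTransition.one_of_one_le ((one_le_div hd).2 (by linarith))
      have h2 : 0 ≤ S ((-s - a) / (b - a)) := Real.smoothTransition.nonneg _
      simp only [hψ]; linarith
    · have : S ((-s - a) / (b - a)) = 1 :=
        Real.smoothTransition.one_of_one_le ((one_le_div hd).2 (by linarith))
      have h2 : 0 ≤ S ((s - a) / (b - a)) := Real.smoothTransition.nonneg _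
      simp only [hψ]; linarith
  have hSd : Differentiable ℝ S := hSc.differentiable (by norm_num)
  have hψd : ∀ s, |deriv ψ s| ≤ 2 * M / (b - a) := by
    intro s
    have h1 : HasDerivAt (fun s : ℝ => S ((s - a) / (b - a)))
        (deriv S ((s - a) / (b - a)) * (1 / (b - a))) s := by
      refine HasDerivAt.comp s (hSd _).hasDerivAt ?_
      exact ((hasDerivAt_id s).sub_const a).div_const (b - a)
    have h2 : HasDerivAt (fun s : ℝ => S ((-s - a) / (b - a)))
        (deriv S ((-s - a) / (b - a)) * (-1 / (b - a))) s := by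
      refine HasDerivAt.comp s (hSd _).hasDerivAt ?_
      exact ((hasDerivAt_id s).neg.sub_const a).div_const (b - a)
    have h3 : HasDerivAt ψ _ s := h1.add h2
    rw [h3.deriv]
    have e1 := hM ((s - a) / (b - a))
    have e2 := hM ((-s - a) / (b - a))
    calc _ = |deriv S ((s - a) / (b - a)) - deriv S ((-s - a) / (b - a))| / (b - a) := by
          rw [← abs_of_pos hd, ← abs_div, abs_of_pos hd]; congr 1; ring
      _ ≤ _ := by
        gcongr
        exact (abs_sub _ _).trans (by linarith)
  set u := fun x => ψ (f x) with hu
  have hf1 : ContDiff ℝ 1 f := hf.of_le (by exact_mod_cast le_top)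
  have huc : ContDiff ℝ 1 u := hψc.comp hf1
  have hus : HasCompactSupport u := hfc.comp_left (g := ψ) (hψ0 0 (by simpa using ha.le))
  have hgns := lintegral_pow_le_pow_lintegral_fderiv (volume : Measure (EuclideanSpace ℝ (Fin n)))
    huc hus (p := r) (by simpa using hconj)
  have hAm : MeasurableSet {x | a < |f x|} :=
    measurableSet_lt measurable_const hf1.continuous.abs.measurable
  have hBm : MeasurableSet {x | b < |f x|} :=
    measurableSet_lt measurable_const hf1.continuous.abs.measurable
  have hDu : ∫⁻ x, ‖fderiv ℝ u x‖ₑ ≤ ENNReal.ofReal (2 * M / (b - a)) *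
      ∫⁻ x in {x | a < |f x|}, ‖fderiv ℝ f x‖ₑ := by
    rw [← lintegral_const_mul' _ _ (by simp), ← lintegral_indicator hAm]
    refine lintegral_mono fun x => ?_
    by_cases hx : a < |f x|
    · rw [indicator_of_mem (show x ∈ {x | a < |f x|} from hx)]
      have : fderiv ℝ u x = deriv ψ (f x) • fderiv ℝ f x := by
        have h1 : HasDerivAt ψ (deriv ψ (f x)) (f x) :=
          (hψc.differentiable (by norm_num) _).hasDerivAt
        exact (h1.comp_hasFDerivAt x (hf1.differentiable (by norm_num) x).hasFDerivAt).fderiv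
      rw [this, enorm_smul]
      gcongr
      rw [Real.enorm_eq_ofReal_abs]
      exact ENNReal.ofReal_le_ofReal (hψd _)
    · have : fderiv ℝ u x = 0 := by
        apply IsLocalMin.fderiv_eq_zero
        refine Filter.Eventually.of_forall fun y => ?_
        simp only [hu]
        rw [hψ0 (f x) (not_lt.1 hx)]
        exact hψnn _
      have h0 : ‖fderiv ℝ u x‖ₑ = 0 := by
        rw [← ofReal_norm, norm_eq_zero.2 this, ENNReal.ofReal_zero]
      rw [h0]; exact zero_le
  have hlow : ENNReal.ofReal t ≤ ∫⁻ x, ‖u x‖ₑ ^ r := by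
    refine ht.trans ?_
    rw [← lintegral_indicator_one hBm]
    refine lintegral_mono fun x => ?_
    by_cases hx : b < |f x|
    · rw [indicator_of_mem (show x ∈ {x | b < |f x|} from hx)]
      refine ENNReal.one_le_rpow ?_ hr0
      rw [Real.enorm_eq_ofReal_abs, ENNReal.one_le_ofReal]
      exact (hψ1 _ hx).trans (le_abs_self _)
    · rw [indicator_of_notMem (show x ∉ {x | b < |f x|} from hx)]; exact zero_le
  have h1 : ENNReal.ofReal t ^ r⁻¹ ≤ (K : ℝ≥0∞) ^ r⁻¹ * ∫⁻ x, ‖fderiv ℝ u x‖ₑ := by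
    calc _ ≤ ((K : ℝ≥0∞) * (∫⁻ x, ‖fderiv ℝ u x‖ₑ) ^ r) ^ r⁻¹ :=
          ENNReal.rpow_le_rpow (hlow.trans hgns) (by positivity)
      _ = _ := by
        rw [ENNReal.mul_rpow_of_nonneg _ _ (by positivity), ENNReal.rpow_rpow_inv hr0.ne']
  rw [← hrinv]
  calc _ ≤ ENNReal.ofReal (b - a) * ((K : ℝ≥0∞) ^ r⁻¹ * (ENNReal.ofReal (2 * M / (b - a)) *
      ∫⁻ x in {x | a < |f x|}, ‖fderiv ℝ f x‖ₑ)) := by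
        gcongr; exact h1.trans (by gcongr)
    _ = (K : ℝ≥0∞) ^ r⁻¹ * (ENNReal.ofReal (b - a) * ENNReal.ofReal (2 * M / (b - a))) *
      ∫⁻ x in {x | a < |f x|}, ‖fderiv ℝ f x‖ₑ := by ring
    _ = _ := by
      rw [← ENNReal.ofReal_mul hd.le]
      congr 3
      field_simp

theorem norm_gradient_eq {n : ℕ} (f : EuclideanSpace ℝ (Fin n) → ℝ) (x) :
    ‖gradient f x‖ = ‖fderiv ℝ f x‖ := by
  simp [gradient]

theorem level_bound (n : ℕ) (hn : 2 ≤ n) : ∃ C : ℝ≥0∞, C ≠ ⊤ ∧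
    ∀ f : EuclideanSpace ℝ (Fin n) → ℝ, ContDiff ℝ (⊤ : ℕ∞) f → HasCompactSupport f →
    ∀ t : ℝ, 0 < t → rearr volume f t ≤ rearr volume f (2 * t) +
      C * (ENNReal.ofReal t ^ (n:ℝ)⁻¹ * ∑' j : ℕ, ENNReal.ofReal (1 / 2 ^ j) *
        rearr volume (fun x => ‖gradient f x‖) (2 * t / 2 ^ j)) := by
  obtain ⟨C, hC, h⟩ := trunc_bound n hn
  refine ⟨C * 4, ENNReal.mul_ne_top hC (by norm_num), fun f hf hfc t ht => ?_⟩
  set g := fun x => ‖gradient f x‖ with hg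
  have hf1 : ContDiff ℝ 1 f := hf.of_le (by exact_mod_cast le_top)
  have hgm : Measurable g := by
    simp only [hg, norm_gradient_eq]
    exact (hf1.continuous_fderiv (by norm_num)).norm.measurable
  set TT := ∑' j : ℕ, ENNReal.ofReal (1 / 2 ^ j) * rearr volume g (2 * t / 2 ^ j) with hTT
  set R := C * 4 * (ENNReal.ofReal t ^ (n:ℝ)⁻¹ * TT) with hR
  by_contra! hcon
  obtain ⟨b, hb1, hb2⟩ := ENNReal.lt_iff_exists_nnreal_btwn.1 hcon
  obtain ⟨a, ha1, ha2⟩ := ENNReal.lt_iff_exists_nnreal_btwn.1 (lt_tsub_iff_right.2 hb1)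
  rw [lt_tsub_iff_right] at ha2
  have ha0 : 0 < a := by exact_mod_cast (zero_le.trans_lt ha1 : (0:ℝ≥0∞) < a)
  have hab : a < b := by exact_mod_cast (le_self_add.trans_lt ha2 : (a:ℝ≥0∞) < b)
  have hset : ∀ c : NNReal, {x | (c:ℝ) < |f x|} = {x | (c:ℝ≥0∞) < ENNReal.ofReal |f x|} := by
    intro c
    ext x
    simp only [mem_ofPred_eq]
    rw [ENNReal.lt_ofReal_iff_toReal_lt (by simp)]; simp
  have hb0 : (0:ℝ≥0∞) < b := by exact_mod_cast ha0.trans hab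
  have hmb : ENNReal.ofReal t ≤ volume {x | (b:ℝ) < |f x|} := by
    rw [hset]; exact (lt_distrib_of_lt_rearr volume f t hb0 hb2).le
  have hma : volume {x | (a:ℝ) < |f x|} ≤ ENNReal.ofReal (2 * t) := by
    rw [hset]
    refine le_trans (measure_mono fun x hx => ?_) (rearr_distrib volume f (2 * t))
    exact ha1.trans hx
  have hAm : MeasurableSet {x | (a:ℝ) < |f x|} :=
    measurableSet_lt measurable_const hf1.continuous.abs.measurable
  have h1 := h f hf hfc a b t (by exact_mod_cast ha0) (by exact_mod_cast hab) hmb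
  have h2 := setLIntegral_le_tsum volume g hgm _ hAm (2 * t) (by positivity) hma
  have h3 : ∫⁻ x in {x | (a:ℝ) < |f x|}, ‖fderiv ℝ f x‖ₑ =
      ∫⁻ x in {x | (a:ℝ) < |f x|}, ENNReal.ofReal |g x| := by
    congr 1; ext x
    simp only [hg, norm_gradient_eq, abs_norm, ofReal_norm]
  have h4 : 2 * ∑' j : ℕ, ENNReal.ofReal (2 * t / 2 ^ j) * rearr volume g (2 * t / 2 ^ j) =
      4 * ENNReal.ofReal t * TT := by
    rw [hTT, ← ENNReal.tsum_mul_left, ← ENNReal.tsum_mul_left]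
    congr 1; ext j
    have : 2 * t / 2 ^ j = 2 * t * (1 / 2 ^ j) := by ring
    have e : ENNReal.ofReal (2 * t / 2 ^ j) = 2 * ENNReal.ofReal t * ENNReal.ofReal (1 / 2 ^ j) := by
      rw [this, ENNReal.ofReal_mul (by positivity), ENNReal.ofReal_mul (by norm_num)]; simp
    rw [e]; ring
  rw [h3] at h1
  rw [h4] at h2
  have h5 := h1.trans (mul_le_mul_right h2 C)
  have ht0 : ENNReal.ofReal t ≠ 0 := by simpa using ht
  have ht' : ENNReal.ofReal t ≠ ⊤ := by simp
  have h6 := mul_le_mul_left h5 (ENNReal.ofReal t ^ ((n:ℝ)⁻¹ - 1))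
  rw [mul_assoc, ← ENNReal.rpow_add _ _ ht0 ht'] at h6
  have h7 : C * (4 * ENNReal.ofReal t * TT) * ENNReal.ofReal t ^ ((n:ℝ)⁻¹ - 1) = R := by
    rw [hR, ENNReal.rpow_sub _ _ ht0 ht', ENNReal.rpow_one, div_eq_mul_inv]
    calc _ = (ENNReal.ofReal t * (ENNReal.ofReal t)⁻¹) *
        (C * 4 * (ENNReal.ofReal t ^ (n:ℝ)⁻¹ * TT)) := by ring
      _ = _ := by rw [ENNReal.mul_inv_cancel ht0 ht', one_mul]
  rw [h7] at h6
  simp only [sub_add_sub_cancel, sub_self, ENNReal.rpow_zero, mul_one] at h6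
  refine absurd ha2 (not_lt.2 ?_)
  calc (b:ℝ≥0∞) = a + ENNReal.ofReal (b - a) := by
        rw [← ENNReal.ofReal_coe_nnreal (p := a), ← ENNReal.ofReal_coe_nnreal (p := b),
          ← ENNReal.ofReal_add (by positivity) (sub_nonneg.2 (by exact_mod_cast hab.le))]
        simp
    _ ≤ a + R := by gcongr

theorem rearr_iterate (n : ℕ) (f : EuclideanSpace ℝ (Fin n) → ℝ) (hfc : HasCompactSupport f)
    (B : ℝ → ℝ≥0∞)
    (h : ∀ t : ℝ, 0 < t → rearr volume f t ≤ rearr volume f (2 * t) + B t) (t : ℝ) (ht : 0 < t) :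
    rearr volume f t ≤ ∑' k : ℕ, B (2 ^ k * t) := by
  have hN : ∀ N : ℕ, rearr volume f t ≤ rearr volume f (2 ^ N * t) +
      ∑ k ∈ Finset.range N, B (2 ^ k * t) := by
    intro N
    induction N with
    | zero => simp
    | succ N ih =>
      refine ih.trans ?_
      have h1 := h (2 ^ N * t) (by positivity)
      rw [← mul_assoc, ← pow_succ'] at h1
      rw [Finset.sum_range_succ]
      calc _ ≤ (rearr volume f (2 ^ (N+1) * t) + B (2 ^ N * t)) +
          ∑ k ∈ Finset.range N, B (2 ^ k * t) := by gcongr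
        _ = _ := by ring
  have hV : volume (tsupport f) < ⊤ := hfc.isCompact.measure_lt_top
  obtain ⟨N, hN'⟩ := pow_unbounded_of_one_lt ((volume (tsupport f)).toReal / t) (one_lt_two)
  have hz : rearr volume f (2 ^ N * t) = 0 := by
    refine le_antisymm (le_of_forall_gt fun l hl => ?_) zero_le
    obtain ⟨m, hm0, hml⟩ := exists_between hl
    refine lt_of_le_of_lt (sInf_le ⟨hm0, ?_⟩) hml
    calc distribFn volume f m ≤ volume (tsupport f) := by
          refine measure_mono fun x hx => subset_tsupport f ?_
          intro h0
          simp only [mem_ofPred_eq, h0] at hx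
          simp at hx
      _ = ENNReal.ofReal (volume (tsupport f)).toReal := (ENNReal.ofReal_toReal hV.ne).symm
      _ ≤ _ := ENNReal.ofReal_le_ofReal ((div_lt_iff₀ ht).1 hN').le
  refine (hN N).trans ?_
  rw [hz, zero_add]
  exact ENNReal.sum_le_tsum _

/-- The weights in the final discrete convolution bound. -/
noncomputable def wgt (n : ℕ) (p : ℝ) (i : ℕ × ℕ) : ℝ :=
  ((2:ℝ) ^ i.1) ^ (n:ℝ)⁻¹ * (1 / 2 ^ i.2) * ((2:ℝ) ^ (i.1 + 1) / 2 ^ i.2) ^ (-p⁻¹)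

theorem wgt_nonneg (n : ℕ) (p : ℝ) (i : ℕ × ℕ) : 0 ≤ wgt n p i := by
  unfold wgt; positivity

theorem wgt_summable (n : ℕ) (p : ℝ) (hp1 : 1 < p) (hpn : p < n) :
    Summable (wgt n p) := by
  have hp0 : 0 < p := by linarith
  have h1 : Summable fun k : ℕ => ((2:ℝ) ^ ((n:ℝ)⁻¹ - p⁻¹)) ^ k := by
    refine summable_geometric_of_lt_one (by positivity) ?_
    refine Real.rpow_lt_one_of_one_lt_of_neg (by norm_num) ?_
    have := (inv_lt_inv₀ (by linarith) hp0).2 hpn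
    linarith
  have h2 : Summable fun k : ℕ => ((2:ℝ) ^ (p⁻¹ - 1)) ^ k := by
    refine summable_geometric_of_lt_one (by positivity) ?_
    refine Real.rpow_lt_one_of_one_lt_of_neg (by norm_num) ?_
    have := inv_lt_one_of_one_lt₀ hp1
    linarith
  have h3 := (h1.mul_of_nonneg h2 (fun k => by positivity) (fun k => by positivity)).mul_left
    ((2:ℝ) ^ (-p⁻¹))
  refine h3.congr fun i => ?_
  obtain ⟨k, j⟩ := i
  simp only [wgt]
  have e : (2:ℝ) ^ (k+1) / 2 ^ j = 2 ^ ((k:ℝ) + 1 - j) := by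
    rw [Real.rpow_sub (by norm_num), Real.rpow_natCast, ← Nat.cast_succ, Real.rpow_natCast]
  have e2 : (1:ℝ) / 2 ^ j = 2 ^ (-(j:ℝ)) := by
    rw [Real.rpow_neg (by norm_num), Real.rpow_natCast, one_div]
  rw [e, e2, ← Real.rpow_natCast, ← Real.rpow_natCast, ← Real.rpow_natCast,
    ← Real.rpow_mul (by norm_num), ← Real.rpow_mul (by norm_num), ← Real.rpow_mul (by norm_num),
    ← Real.rpow_mul (by norm_num), ← Real.rpow_add (by norm_num), ← Real.rpow_add (by norm_num),
    ← Real.rpow_add (by norm_num), ← Real.rpow_add (by norm_num)]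
  congr 1
  ring

theorem pointwise_bound (n : ℕ) (hn : 2 ≤ n) (p : ℝ) : ∃ C : ℝ≥0∞, C ≠ ⊤ ∧
    ∀ f : EuclideanSpace ℝ (Fin n) → ℝ, ContDiff ℝ (⊤ : ℕ∞) f → HasCompactSupport f →
    ∀ t : ℝ, 0 < t → ENNReal.ofReal t ^ (p⁻¹ - (n:ℝ)⁻¹) * rearr volume f t ≤
      ∑' i : ℕ × ℕ, (C * ENNReal.ofReal (wgt n p i)) *
        (ENNReal.ofReal ((2:ℝ) ^ (i.1 + 1) / 2 ^ i.2 * t) ^ p⁻¹ *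
          rearr volume (fun x => ‖gradient f x‖) ((2:ℝ) ^ (i.1 + 1) / 2 ^ i.2 * t)) := by
  obtain ⟨C, hC, h⟩ := level_bound n hn
  refine ⟨C, hC, fun f hf hfc t ht => ?_⟩
  have h1 := rearr_iterate n f hfc _ (h f hf hfc) t ht
  refine (mul_le_mul_right h1 _).trans (le_of_eq ?_)
  rw [ENNReal.tsum_prod', ← ENNReal.tsum_mul_left]
  congr 1; ext k
  rw [← ENNReal.tsum_mul_left, ← ENNReal.tsum_mul_left, ← ENNReal.tsum_mul_left]
  congr 1; ext j
  have hc : 2 * (2 ^ k * t) / 2 ^ j = (2:ℝ) ^ (k + 1) / 2 ^ j * t := by ring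
  rw [hc]
  have key : ENNReal.ofReal t ^ (p⁻¹ - (n:ℝ)⁻¹) * (ENNReal.ofReal (2 ^ k * t) ^ (n:ℝ)⁻¹ *
      ENNReal.ofReal (1 / 2 ^ j)) = ENNReal.ofReal (wgt n p (k, j)) *
      ENNReal.ofReal ((2:ℝ) ^ (k + 1) / 2 ^ j * t) ^ p⁻¹ := by
    rw [ENNReal.ofReal_rpow_of_pos ht, ENNReal.ofReal_rpow_of_pos (by positivity),
      ENNReal.ofReal_rpow_of_pos (by positivity), ← ENNReal.ofReal_mul (by positivity),
      ← ENNReal.ofReal_mul (by positivity), ← ENNReal.ofReal_mul (wgt_nonneg _ _ _)]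
    congr 1
    simp only [wgt]
    have hcp : 0 < (2:ℝ) ^ (k + 1) / 2 ^ j := by positivity
    generalize (2:ℝ) ^ (k + 1) / 2 ^ j = c at hcp ⊢
    rw [Real.mul_rpow (by positivity) ht.le, Real.mul_rpow hcp.le ht.le, Real.rpow_neg hcp.le,
      Real.rpow_sub ht]
    have : c ^ p⁻¹ ≠ 0 := by positivity
    have : t ^ (n:ℝ)⁻¹ ≠ 0 := by positivity
    field_simp
  generalize rearr volume (fun x => ‖gradient f x‖) ((2:ℝ) ^ (k + 1) / 2 ^ j * t) = Q
  calc _ = C * (ENNReal.ofReal t ^ (p⁻¹ - (n:ℝ)⁻¹) * (ENNReal.ofReal (2 ^ k * t) ^ (n:ℝ)⁻¹ *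
      ENNReal.ofReal (1 / 2 ^ j))) * Q := by ring
    _ = _ := by rw [key]; ring

/-- Sobolev inequality in Lorentz spaces on ℝⁿ:
`‖f‖_{np/(n-p),q} ≤ c ‖|∇f|‖_{p,q}`. -/
theorem stmt_9 (n : ℕ) (hn : 2 ≤ n) (p : ℝ) (hp1 : 1 < p) (hpn : p < n)
    (q : ℝ≥0∞) (hq : 1 ≤ q) :
    ∃ c : ℝ, 0 < c ∧ ∀ f : EuclideanSpace ℝ (Fin n) → ℝ,
      ContDiff ℝ (⊤ : ℕ∞) f → HasCompactSupport f →
      lorentz volume (ENNReal.ofReal ((n : ℝ) * p / ((n : ℝ) - p))) q f ≤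
        ENNReal.ofReal c *
          lorentz volume (ENNReal.ofReal p) q (fun x => ‖gradient f x‖) := by
  obtain ⟨C, hC, h⟩ := pointwise_bound n hn p
  have hp0 : 0 < p := by linarith
  have hnp : 0 < (n:ℝ) - p := by linarith
  have hn0 : 0 < (n:ℝ) := by linarith
  set w : ℕ × ℕ → ℝ≥0∞ := fun i => C * ENNReal.ofReal (wgt n p i) with hw
  set W := ∑' i, w i with hWdef
  have hW : W ≠ ⊤ := by
    rw [hWdef, hw, ENNReal.tsum_mul_left]
    exact ENNReal.mul_ne_top hC (wgt_summable n p hp1 hpn).tsum_ofReal_ne_top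
  refine ⟨W.toReal + 1, by positivity, fun f hf hfc => ?_⟩
  have hWc : W ≤ ENNReal.ofReal (W.toReal + 1) := by
    rw [ENNReal.le_ofReal_iff_toReal_le hW (by positivity)]; linarith
  refine le_trans ?_ (mul_le_mul_left hWc _)
  have hs : (ENNReal.ofReal ((n:ℝ) * p / ((n:ℝ) - p))).toReal⁻¹ = p⁻¹ - (n:ℝ)⁻¹ := by
    rw [ENNReal.toReal_ofReal (by positivity)]
    field_simp
  set g := fun x => ‖gradient f x‖ with hg
  have hpt := h f hf hfc
  set G : ℝ → ℝ≥0∞ := fun t => ENNReal.ofReal t ^ p⁻¹ * rearr volume g t with hG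
  have hGm : Measurable G := by
    have := (rearr_antitone volume g).measurable
    fun_prop
  have hpt' : ∀ t : ℝ, 0 < t → ENNReal.ofReal t ^ (p⁻¹ - (n:ℝ)⁻¹) * rearr volume f t ≤
      ∑' i : ℕ × ℕ, w i * G ((2:ℝ) ^ (i.1 + 1) / 2 ^ i.2 * t) := hpt
  unfold lorentz
  rw [hs, ENNReal.toReal_ofReal hp0.le]
  split_ifs with hqt
  · refine iSup₂_le fun t ht => (hpt' t ht).trans ?_
    rw [hWdef, ← ENNReal.tsum_mul_right]
    refine ENNReal.tsum_le_tsum fun i => ?_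
    gcongr
    refine le_iSup₂_of_le ((2:ℝ) ^ (i.1 + 1) / 2 ^ i.2 * t) ?_ le_rfl
    have : 0 < t := ht
    exact mem_Ioi.2 (by positivity)
  · have hq1 : 1 ≤ q.toReal := by
      simpa using ENNReal.toReal_mono hqt hq
    have hq0 : 0 < q.toReal := by linarith
    rw [ENNReal.rpow_inv_le_iff hq0, ENNReal.mul_rpow_of_nonneg _ _ hq0.le,
      ENNReal.rpow_inv_rpow hq0.ne']
    calc _ ≤ ∫⁻ t in Ioi (0:ℝ), W ^ (q.toReal - 1) *
          ∑' i : ℕ × ℕ, w i * (G ((2:ℝ) ^ (i.1 + 1) / 2 ^ i.2 * t) ^ q.toReal / ENNReal.ofReal t) := by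
          refine setLIntegral_mono' measurableSet_Ioi fun t ht => ?_
          have h1 := (ENNReal.rpow_le_rpow (hpt' t ht) hq0.le).trans (jensen_tsum w _ hW hq1)
          refine (ENNReal.div_le_div_right h1 _).trans (le_of_eq ?_)
          simp_rw [div_eq_mul_inv]
          rw [mul_assoc, ← ENNReal.tsum_mul_right]
          simp_rw [mul_assoc]
          rfl
      _ = W ^ (q.toReal - 1) * ∑' i : ℕ × ℕ, w i *
          ∫⁻ t in Ioi (0:ℝ), G t ^ q.toReal / ENNReal.ofReal t := by
          rw [lintegral_const_mul _ (by fun_prop), lintegral_tsum (fun i => by fun_prop)]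
          congr 2; ext i
          rw [lintegral_const_mul _ (by fun_prop)]
          congr 1
          exact lintegral_scale (fun t => G t ^ q.toReal) (by fun_prop) _ (by positivity)
      _ = _ := by
          rw [ENNReal.tsum_mul_right, ← hWdef, ← mul_assoc]
          congr 1
          nth_rewrite 2 [← ENNReal.rpow_one W]
          rw [← ENNReal.rpow_add_of_nonneg _ _ (by linarith) (by norm_num)]
          congr 1; ring
end
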